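/- Let τ be a finite index set and d_v ≥ 1 for v ∈ τ. If p and p' are two pmfs on I_τ = ∏_{v∈τ} {1,…,d_v} whose saturated Möbius parameters agree, i.e., q_p(j_σ) = q_{p'}(j_σ) for every σ ⊆ τ and every j_σ ∈ J_σ, then p = p'. (The linear map from the probability simplex to the saturated Möbius parameters is injective; part of Lemma 7.) -/

import Mathlib

open Finset
open scoped Classical

/-- The saturated Möbius parameter of `A ⊆ τ` at the `A`-coordinates of `j`: the marginal
probability that the coordinates in `A` equal those of `j`. -/
noncomputable def satMobius {τ : Type*} [Fintype τ] {d : τ → ℕ}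
    (p : (∀ v, Fin (d v)) → ℝ) (A : Finset τ) (j : ∀ v, Fin (d v)) : ℝ :=
  ∑ k ∈ Finset.univ.filter (fun k : ∀ v, Fin (d v) => ∀ v ∈ A, k v = j v), p k

/-! Let `o v` be the one state left out of the reduced range of coordinate `v`. The marginal at a
configuration in state `o v` at `v ∈ A` is the marginal over `A \ {v}` minus those at the
configurations in the other states at `v`. Eliminating the states `o v` one coordinate at a time
determines every marginal, in particular `p` itself, the marginal on all coordinates. -/

section Marginal

variable {τ M : Type*} {α : τ → Type*} [Fintype τ] [DecidableEq τ]
  [∀ v, Fintype (α v)] [∀ v, DecidableEq (α v)]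

/-- The marginal of `p` on the coordinates in `A`, evaluated at the `A`-coordinates of `j`. It takes
a full configuration `j` and ignores the coordinates outside `A`, which avoids dependent functions
on subsets of `τ`. -/
def marginal [AddCommMonoid M] (p : (∀ v, α v) → M) (A : Finset τ) (j : ∀ v, α v) : M :=
  ∑ k with ∀ v ∈ A, k v = j v, p k

theorem marginal_univ [AddCommMonoid M] (p : (∀ v, α v) → M) (j : ∀ v, α v) :
    marginal p univ j = p j := by
  have filter_eq_singleton : ({k | ∀ v ∈ univ, k v = j v} : Finset (∀ v, α v)) = {j} := by
    ext k
    simp [funext_iff]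
  rw [marginal, filter_eq_singleton, sum_singleton]

theorem marginal_erase [AddCommMonoid M] (p : (∀ v, α v) → M) {A : Finset τ} {v : τ} (hv : v ∈ A)
    (j : ∀ v, α v) :
    marginal p (A.erase v) j = ∑ x, marginal p A (Function.update j v x) := by
  have agree_iff (x : α v) (k : ∀ v, α v) :
      ((∀ w ∈ A.erase v, k w = j w) ∧ k v = x) ↔ ∀ w ∈ A, k w = Function.update j v x w := by
    rw [← insert_erase hv, forall_mem_insert, and_comm, Function.update_self, erase_insert_eq_erase,
      erase_idem]
    refine and_congr_right' (forall₂_congr fun w hw => ?_)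
    rw [Function.update_of_ne (ne_of_mem_erase hw)]
  simp_rw [marginal, ← agree_iff, ← filter_filter, sum_fiberwise]

theorem marginal_eq_of_erase_of_forall_ne [AddCancelCommMonoid M] {p p' : (∀ v, α v) → M}
    {A : Finset τ} {v : τ} (hv : v ∈ A) {j : ∀ v, α v}
    (h_erase : marginal p (A.erase v) j = marginal p' (A.erase v) j)
    (h_ne : ∀ x ≠ j v,
      marginal p A (Function.update j v x) = marginal p' A (Function.update j v x)) :
    marginal p A j = marginal p' A j := by
  have sum_ne_eq : ∑ x ∈ {j v}ᶜ, marginal p A (Function.update j v x) =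
      ∑ x ∈ {j v}ᶜ, marginal p' A (Function.update j v x) :=
    sum_congr rfl fun x hx => h_ne x (by simpa using hx)
  rw [marginal_erase p hv, marginal_erase p' hv, Fintype.sum_eq_add_sum_compl (j v),
    Fintype.sum_eq_add_sum_compl (j v), sum_ne_eq, Function.update_eq_self] at h_erase
  exact add_right_cancel h_erase

theorem marginal_eq_of_forall_ne [AddCancelCommMonoid M] {p p' : (∀ v, α v) → M} (o : ∀ v, α v)
    (h : ∀ (A : Finset τ) (j : ∀ v, α v), (∀ v ∈ A, j v ≠ o v) → marginal p A j = marginal p' A j)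
    (A : Finset τ) (j : ∀ v, α v) : marginal p A j = marginal p' A j := by
  suffices of_reduced_off : ∀ (B A : Finset τ) (j : ∀ v, α v),
      (∀ v ∈ A, v ∉ B → j v ≠ o v) → marginal p A j = marginal p' A j from
    of_reduced_off univ A j fun v _ hv => (hv (mem_univ v)).elim
  intro B
  induction B using Finset.induction_on with
  | empty => exact fun A j hj => h A j fun v hv => hj v hv (notMem_empty v)
  | insert v B _ ih =>
    intro A j hj
    by_cases hv : v ∈ A ∧ j v = o v
    · obtain ⟨hvA, hjv⟩ := hv
      refine marginal_eq_of_erase_of_forall_ne hvA (ih _ _ fun w hw hwB => ?_)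
        fun x hx => ih _ _ fun w hw hwB => ?_
      · exact hj w (mem_of_mem_erase hw) (by simp [ne_of_mem_erase hw, hwB])
      · obtain rfl | hwv := eq_or_ne w v
        · simpa only [Function.update_self, hjv] using hx
        · simpa only [Function.update_of_ne hwv] using hj w hw (by simp [hwv, hwB])
    · refine ih A j fun w hw hwB => ?_
      obtain rfl | hwv := eq_or_ne w v
      · exact fun hjw => hv ⟨hw, hjw⟩
      · exact hj w hw (by simp [hwv, hwB])

theorem mobius_parameters_injective_general [AddCancelCommMonoid M] {p p' : (∀ v, α v) → M}
    (o : ∀ v, α v)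
    (h : ∀ (A : Finset τ) (j : ∀ v, α v), (∀ v ∈ A, j v ≠ o v) → marginal p A j = marginal p' A j) :
    p = p' := by
  funext j
  rw [← marginal_univ p, ← marginal_univ p', marginal_eq_of_forall_ne o h]

end Marginal

theorem satMobius_eq_marginal {τ : Type*} [Fintype τ] {d : τ → ℕ} (p : (∀ v, Fin (d v)) → ℝ)
    (A : Finset τ) (j : ∀ v, Fin (d v)) : satMobius p A j = marginal p A j :=
  rfl

/-- part of Lemma 7: two pmfs on `I_τ` whose saturated Möbius parameters
agree (for every `σ ⊆ τ` and every `j_σ ∈ J_σ`, i.e. every state vector whose coordinates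
on `σ` lie in the reduced ranges) are equal. -/
theorem mobius_parameters_injective {τ : Type*} [Fintype τ] (d : τ → ℕ)
    (hd : ∀ v, 1 ≤ d v)
    (p p' : (∀ v, Fin (d v)) → ℝ)
    (hp0 : ∀ i, 0 ≤ p i) (hp1 : ∑ i, p i = 1)
    (hp0' : ∀ i, 0 ≤ p' i) (hp1' : ∑ i, p' i = 1)
    (hq : ∀ (σ : Finset τ) (j : ∀ v, Fin (d v)),
      (∀ v ∈ σ, (j v : ℕ) + 1 < d v) → satMobius p σ j = satMobius p' σ j) :
    p = p' := by
  simp only [satMobius_eq_marginal] at hq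
  refine mobius_parameters_injective_general (fun v => ⟨d v - 1, Nat.sub_one_lt_of_lt (hd v)⟩)
    fun σ j hj => hq σ j fun v hv => ?_
  have hjv : (j v : ℕ) ≠ d v - 1 := Fin.val_ne_iff.mpr (hj v hv)
  lia
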